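/- arXiv:2110.08129 — 3 statements merged into one kernel-verified Lean document; each statement's English description precedes it below -/
import Mathlib

section
/- Fundamental Theorem of Calculus for the Caputo derivative: Let 0 < α < 1 and let f : ℝ → ℝ be differentiable on [a,b] (a < b) with derivative f' integrable on [a,b]. Then (1/Γ(α)) ∫_a^b (b-x)^(α-1) · ᶜD^α f(x) dx = f(b) − f(a), where ᶜD^α f(x) = (1/Γ(1−α)) ∫_a^x f'(u) · (x−u)^(−α) du. -/
open MeasureTheory Real Set

lemma caputo_beta (α u b : ℝ) (hα : 0 < α) (hα1 : α < 1) (hub : u < b) :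
    ∫ x in u..b, (b - x) ^ (α - 1) * (x - u) ^ (-α) = Real.Gamma α * Real.Gamma (1 - α) := by
  have hpos : 0 < b - u := sub_pos.2 hub
  have h1 := Complex.betaIntegral_scaled ((1 - α : ℝ) : ℂ) (α : ℂ) hpos
  have h2 := Complex.Gamma_mul_Gamma_eq_betaIntegral (s := ((1 - α : ℝ) : ℂ)) (t := (α : ℂ))
    (by simpa using hα1) (by simpa using hα)
  have e : ((1 - α : ℝ) : ℂ) + (α : ℂ) = 1 := by push_cast; ring
  rw [e, Complex.Gamma_one, one_mul] at h2
  rw [e, sub_self, Complex.cpow_zero, one_mul, ← h2, Complex.Gamma_ofReal,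
    Complex.Gamma_ofReal] at h1
  have h3 : ∫ x in u..b, (b - x) ^ (α - 1) * (x - u) ^ (-α)
      = ∫ x in (0:ℝ)..(b - u), x ^ (-α) * ((b - u) - x) ^ (α - 1) := by
    have := intervalIntegral.integral_comp_sub_right
      (fun x : ℝ => x ^ (-α) * ((b - u) - x) ^ (α - 1)) u (a := u) (b := b)
    rw [sub_self] at this
    rw [← this]
    congr 1
    ext x
    rw [show b - u - (x - u) = b - x by ring, mul_comm]
  rw [h3]
  apply Complex.ofReal_injective
  rw [← intervalIntegral.integral_ofReal, mul_comm (Real.Gamma α)]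
  push_cast at h1 ⊢
  rw [← h1]
  apply intervalIntegral.integral_congr
  intro x hx
  rw [uIcc_of_le hpos.le] at hx
  simp only []
  rw [Complex.ofReal_cpow hx.1, Complex.ofReal_cpow (by linarith [hx.2])]
  push_cast
  congr 2
  ring

/-- Fundamental Theorem of Calculus for the Caputo derivative:
for `0 < α < 1` and `f` differentiable on `[a,b]` with integrable derivative,
`J^α` at `b` of the Caputo derivative `ᶜD^α f` equals `f b - f a`. -/
theorem caputo_fundamental_theorem
    (α a b : ℝ) (hα : 0 < α) (hα1 : α < 1) (hab : a < b)
    (f : ℝ → ℝ)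
    (hdiff : ∀ x ∈ Set.Icc a b, DifferentiableAt ℝ f x)
    (hint : IntervalIntegrable (deriv f) volume a b) :
    (1 / Real.Gamma α) *
      ∫ x in a..b, (b - x) ^ (α - 1) *
        ((1 / Real.Gamma (1 - α)) * ∫ u in a..x, deriv f u * (x - u) ^ (-α)) =
    f b - f a := by
  set B : ℝ := Real.Gamma α * Real.Gamma (1 - α) with hB
  have hG1 : 0 < Real.Gamma α := Real.Gamma_pos_of_pos hα
  have hG2 : 0 < Real.Gamma (1 - α) := Real.Gamma_pos_of_pos (by linarith)
  have hBpos : 0 < B := mul_pos hG1 hG2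
  set μ : Measure ℝ := volume.restrict (Ioc a b) with hμ
  let k : ℝ → ℝ → ℝ := fun u x => (b - x) ^ (α - 1) * (x - u) ^ (-α)
  let K : ℝ → ℝ → ℝ := fun u => (Ioi u).indicator (k u)
  have hg : Integrable (deriv f) μ := (intervalIntegrable_iff_integrableOn_Ioc_of_le hab.le).1 hint
  have hKint : ∀ u ∈ Ioo a b, Integrable (K u) μ ∧ ∫ x, K u x ∂μ = B := by
    intro u hu
    have hb := caputo_beta α u b hα hα1 hu.2
    have hi : IntervalIntegrable (k u) volume u b := by
      by_contra hn
      have := intervalIntegral.integral_undef hn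
      rw [hb] at this
      exact hBpos.ne' this
    have hs : Ioi u ∩ Ioc a b = Ioc u b := by
      ext x
      simp only [mem_inter_iff, mem_Ioi, mem_Ioc]
      exact ⟨fun h => ⟨h.1, h.2.2⟩, fun h => ⟨h.1, hu.1.trans h.1, h.2⟩⟩
    constructor
    · rw [integrable_indicator_iff measurableSet_Ioi, IntegrableOn, hμ,
        Measure.restrict_restrict measurableSet_Ioi, hs]
      exact (intervalIntegrable_iff_integrableOn_Ioc_of_le hu.2.le).1 hi
    · rw [integral_indicator measurableSet_Ioi, hμ,
        Measure.restrict_restrict measurableSet_Ioi, hs,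
        ← intervalIntegral.integral_of_le hu.2.le]
      exact hb
  have hae : ∀ᵐ u ∂μ, u ∈ Ioo a b := by
    rw [hμ, ← restrict_Ioo_eq_restrict_Ioc]
    exact ae_restrict_mem measurableSet_Ioo
  have hKmeas : Measurable (Function.uncurry K) := by
    have : Function.uncurry K = {p : ℝ × ℝ | p.1 < p.2}.indicator
        (fun p => (b - p.2) ^ (α - 1) * (p.2 - p.1) ^ (-α)) := by
      ext ⟨u, x⟩
      simp [K, k, Function.uncurry, indicator]
    rw [this]
    exact Measurable.indicator (by fun_prop) (measurableSet_lt measurable_fst measurable_snd)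
  have hKnn : ∀ u, ∀ᵐ x ∂μ, 0 ≤ K u x := by
    intro u
    filter_upwards [hae] with x hx
    refine indicator_apply_nonneg (f := k u) fun h => ?_
    exact mul_nonneg (rpow_nonneg (by linarith [hx.2]) _) (rpow_nonneg (sub_nonneg.2 (le_of_lt h)) _)
  have hF : Integrable (Function.uncurry fun u x => deriv f u * K u x) (μ.prod μ) := by
    have hm : AEStronglyMeasurable (Function.uncurry fun u x => deriv f u * K u x) (μ.prod μ) :=
      (hg.aestronglyMeasurable.comp_fst).mul hKmeas.aestronglyMeasurable
    rw [integrable_prod_iff hm]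
    constructor
    · filter_upwards [hae] with u hu
      exact (hKint u hu).1.const_mul (deriv f u)
    · refine (hg.norm.mul_const B).congr ?_
      filter_upwards [hae] with u hu
      rw [← (hKint u hu).2, ← integral_const_mul]
      apply integral_congr_ae
      filter_upwards [hKnn u] with x hx
      simp [Function.uncurry, abs_of_nonneg hx]
  have hswap := integral_integral_swap hF
  have hL : ∫ u, ∫ x, deriv f u * K u x ∂μ ∂μ = (f b - f a) * B := by
    rw [← intervalIntegral.integral_eq_sub_of_hasDerivAt (f := f) (f' := deriv f) (a := a) (b := b)
      (by rw [uIcc_of_le hab.le]; exact fun x hx => (hdiff x hx).hasDerivAt) hint,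
      intervalIntegral.integral_of_le hab.le, ← integral_mul_const]
    apply integral_congr_ae
    filter_upwards [hae] with u hu
    rw [integral_const_mul, (hKint u hu).2]
  have hR : ∫ x, ∫ u, deriv f u * K u x ∂μ ∂μ
      = ∫ x in a..b, (b - x) ^ (α - 1) * ∫ u in a..x, deriv f u * (x - u) ^ (-α) := by
    rw [intervalIntegral.integral_of_le hab.le]
    apply integral_congr_ae
    filter_upwards [hae] with x hx
    rw [← intervalIntegral.integral_const_mul, intervalIntegral.integral_of_le hx.1.le,
      integral_Ioc_eq_integral_Ioo (x := a) (y := x)]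
    have hs : Iio x ∩ Ioc a b = Ioo a x := by
      ext u
      simp only [mem_inter_iff, mem_Iio, mem_Ioc, mem_Ioo]
      exact ⟨fun h => ⟨h.2.1, h.1⟩, fun h => ⟨h.2, h.1, (h.2.trans hx.2).le⟩⟩
    rw [← hs, ← Measure.restrict_restrict measurableSet_Iio, ← integral_indicator measurableSet_Iio]
    congr 1
    ext u
    by_cases h : u < x
    · simp [K, k, indicator, h]
      ring
    · simp [K, indicator, h]
  rw [hR] at hswap
  have hc : ∀ x, (b - x) ^ (α - 1) *
        ((1 / Real.Gamma (1 - α)) * ∫ u in a..x, deriv f u * (x - u) ^ (-α))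
      = (1 / Real.Gamma (1 - α)) * ((b - x) ^ (α - 1) * ∫ u in a..x, deriv f u * (x - u) ^ (-α)) :=
    fun x => by ring
  simp_rw [hc]
  rw [intervalIntegral.integral_const_mul, ← hswap, hL, hB]
  field_simp
end

section
/- Cauchy formula for repeated integration (the Riemann–Liouville integral of integer order n coincides with the n-fold iterated integral): Let n ≥ 1 be an integer, a < b, and let f : ℝ → ℝ be continuous on [a,b]. Define F(x) = (1/(n−1)!) ∫_a^x (x−u)^(n−1) f(u) du. Then the n-th iterated derivative of F equals f at every x ∈ (a,b), and the k-th iterated derivative of F at a equals 0 for every 0 ≤ k ≤ n−1. -/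
open MeasureTheory Real Set

lemma crr_param (g : ℝ → ℝ) (hg : Integrable g) (a : ℝ) (m : ℕ) (x : ℝ) :
    HasDerivAt (fun y => ∫ u in a..x, (y - u) ^ (m + 1) * g u)
      (∫ u in a..x, ((m + 1 : ℕ) : ℝ) * (x - u) ^ m * g u) x := by
  have hii : ∀ (p : ℝ → ℝ), Continuous p →
      IntervalIntegrable (fun u => p u * g u) volume a x := fun p hp =>
    (hg.intervalIntegrable).continuousOn_mul hp.continuousOn
  have := intervalIntegral.hasDerivAt_integral_of_dominated_loc_of_deriv_le
    (μ := volume) (a := a) (b := x) (x₀ := x) (s := Metric.ball x 1)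
    (F := fun y u => (y - u) ^ (m + 1) * g u)
    (F' := fun y u => ((m + 1 : ℕ) : ℝ) * (y - u) ^ m * g u)
    (bound := fun u => ((m + 1 : ℕ) : ℝ) * (1 + |x - a|) ^ m * |g u|)
    (Metric.ball_mem_nhds x one_pos) ?_ ?_ ?_ ?_ ?_ ?_
  · exact this.2
  · refine Filter.Eventually.of_forall fun y => ?_
    exact (intervalIntegrable_iff.1 (hii (fun u => (y - u) ^ (m + 1)) (by fun_prop))).aestronglyMeasurable
  · exact hii (fun u => (x - u) ^ (m + 1)) (by fun_prop)
  · exact (intervalIntegrable_iff.1 (hii (fun u => ((m + 1 : ℕ) : ℝ) * (x - u) ^ m)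
      (by fun_prop))).aestronglyMeasurable
  · refine Filter.Eventually.of_forall fun u hu y hy => ?_
    rw [norm_mul, norm_mul, norm_pow]
    simp only [Real.norm_eq_abs, Nat.abs_cast]
    gcongr
    have h1 : |y - x| < 1 := by simpa [Real.dist_eq] using hy
    have h2 : |x - u| ≤ |x - a| := by
      rw [abs_sub_comm x u]
      rw [abs_sub_comm x a, abs_sub_comm a x]
      have := abs_sub_right_of_mem_uIcc (uIoc_subset_uIcc hu)
      rw [abs_sub_comm u x]; exact this
    calc |y - u| = |(y - x) + (x - u)| := by ring_nf
      _ ≤ |y - x| + |x - u| := abs_add_le _ _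
      _ ≤ _ := by linarith
  · exact (hg.abs.const_mul _).intervalIntegrable
  · refine Filter.Eventually.of_forall fun u hu y hy => ?_
    have h := (((hasDerivAt_id y).sub_const u).pow (m + 1)).mul_const (g u)
    simpa using h

lemma crr_deriv (g : ℝ → ℝ) (hg : Integrable g) (a : ℝ) (m : ℕ) (x : ℝ) :
    HasDerivAt (fun y => ∫ u in a..y, (y - u) ^ (m + 1) * g u)
      (((m + 1 : ℕ) : ℝ) * ∫ u in a..x, (x - u) ^ m * g u) x := by
  have h1 := crr_param g hg a m x
  have hii : ∀ (p : ℝ → ℝ), Continuous p → ∀ s t,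
      IntervalIntegrable (fun u => p u * g u) volume s t := fun p hp s t =>
    (hg.intervalIntegrable).continuousOn_mul hp.continuousOn
  have h2 : HasDerivAt (fun y => ∫ u in x..y, (y - u) ^ (m + 1) * g u) 0 x := by
    rw [hasDerivAt_iff_isLittleO]
    have hc : Continuous (fun y => ∫ u in x..y, |g u|) :=
      intervalIntegral.continuous_primitive (fun s t => hg.abs.intervalIntegrable) x
    have hk : Continuous (fun y => |y - x| ^ m * |(∫ u in x..y, |g u|)|) := by fun_prop
    have ht : Filter.Tendsto (fun y => |y - x| ^ m * |(∫ u in x..y, |g u|)|) (nhds x) (nhds 0) := by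
      have := hk.tendsto x
      simpa using this
    rw [Asymptotics.isLittleO_iff]
    intro c hcpos
    filter_upwards [ht.eventually (gt_mem_nhds hcpos)] with y hy
    simp only [intervalIntegral.integral_same, sub_zero, smul_zero, Real.norm_eq_abs]
    have hb : |∫ u in x..y, (y - u) ^ (m + 1) * g u| ≤
        |(∫ u in x..y, |y - x| ^ (m + 1) * |g u|)| := by
      refine intervalIntegral.norm_integral_le_abs_of_norm_le
        (f := fun u => (y - u) ^ (m + 1) * g u) (g := fun u => |y - x| ^ (m + 1) * |g u|) ?_
        (hg.abs.const_mul _).intervalIntegrable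
      refine (ae_restrict_mem measurableSet_uIoc).mono fun u hu => ?_
      rw [norm_mul, norm_pow]
      simp only [Real.norm_eq_abs]
      gcongr ?_ ^ _ * _
      exact abs_sub_right_of_mem_uIcc (uIoc_subset_uIcc hu)
    rw [intervalIntegral.integral_const_mul, abs_mul, abs_pow, abs_abs] at hb
    calc _ ≤ _ := hb
      _ = (|y - x| ^ m * |(∫ u in x..y, |g u|)|) * |y - x| := by ring
      _ ≤ _ := by gcongr
  have h3 := h1.add h2
  rw [add_zero] at h3
  simp only [mul_assoc, intervalIntegral.integral_const_mul] at h3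
  refine h3.congr_of_eventuallyEq (Filter.Eventually.of_forall fun y => ?_)
  simp only [Pi.add_apply]
  rw [intervalIntegral.integral_add_adjacent_intervals] <;>
    exact hii (fun u => (y - u) ^ (m + 1)) (by fun_prop) _ _

lemma crr_iter (g : ℝ → ℝ) (hg : Integrable g) (a : ℝ) (m k : ℕ) (hk : k ≤ m) :
    iteratedDeriv k (fun y => ∫ u in a..y, (y - u) ^ m * g u) =
      fun x => (m.descFactorial k : ℝ) * ∫ u in a..x, (x - u) ^ (m - k) * g u := by
  induction k with
  | zero => simp
  | succ k ih =>
    rw [iteratedDeriv_succ, ih (by omega)]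
    funext x
    obtain ⟨j, rfl⟩ : ∃ j, m = k + 1 + j := ⟨m - (k + 1), by omega⟩
    have e1 : k + 1 + j - k = j + 1 := by omega
    have e2 : k + 1 + j - (k + 1) = j := by omega
    rw [Nat.descFactorial_succ, e1, e2]
    rw [((crr_deriv g hg a j x).const_mul _).deriv]
    push_cast
    ring

/-- On a neighbourhood of `[a,b)` the function only depends on a globally integrable `g`. -/
lemma crr_exists (m : ℕ) (a b : ℝ) (hab : a < b) (f : ℝ → ℝ)
    (hf : ContinuousOn f (Set.Icc a b)) :
    ∃ (g : ℝ → ℝ) (c : ℝ), Integrable g ∧ c < a ∧ (∀ x ∈ Ioo a b, g x = f x) ∧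
      ∀ x ∈ Ioo c b, ∫ u in a..x, (x - u) ^ m * f u = ∫ u in a..x, (x - u) ^ m * g u := by
  have hfab : IntegrableOn f (Ioc a b) := hf.integrableOn_Icc.mono_set Ioc_subset_Icc_self
  by_cases h : ∃ c < a, IntegrableOn f (Ioc c a)
  · obtain ⟨c, hca, hc⟩ := h
    refine ⟨(Ioc c b).indicator f, c, ?_, hca, ?_, ?_⟩
    · rw [integrable_indicator_iff measurableSet_Ioc, ← Ioc_union_Ioc_eq_Ioc hca.le hab.le]
      exact hc.union hfab
    · intro x hx
      exact indicator_of_mem (show x ∈ Ioc c b from ⟨hca.trans hx.1, hx.2.le⟩) f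
    · intro x hx
      refine intervalIntegral.integral_congr fun u hu => ?_
      have hu' : u ∈ Ioc c b := by
        rw [mem_uIcc] at hu
        rcases hu with hu | hu
        · exact ⟨hca.trans_le hu.1, hu.2.trans hx.2.le⟩
        · exact ⟨hx.1.trans_le hu.1, hu.2.trans hab.le⟩
      simp only [indicator_of_mem hu']
  · refine ⟨(Ioc a b).indicator f, a - 1, ?_, by linarith, ?_, ?_⟩
    · rwa [integrable_indicator_iff measurableSet_Ioc]
    · intro x hx
      exact indicator_of_mem (show x ∈ Ioc a b from ⟨hx.1, hx.2.le⟩) f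
    · intro x hx
      rcases le_or_gt a x with hax | hxa
      · rw [intervalIntegral.integral_of_le hax, intervalIntegral.integral_of_le hax]
        refine setIntegral_congr_fun measurableSet_Ioc fun u hu => ?_
        have hu' : u ∈ Ioc a b := ⟨hu.1, hu.2.trans hx.2.le⟩
        simp only [indicator_of_mem hu']
      · have hr : ∫ u in a..x, (x - u) ^ m * (Ioc a b).indicator f u = 0 := by
          rw [intervalIntegral.integral_of_ge hxa.le, neg_eq_zero]
          refine setIntegral_eq_zero_of_forall_eq_zero fun u hu => ?_
          have hu' : u ∉ Ioc a b := fun h' => absurd h'.1 (not_lt.2 hu.2)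
          simp only [indicator_of_notMem hu', mul_zero]
        rw [hr]
        refine intervalIntegral.integral_undef fun hint => h ?_
        refine ⟨(x + a) / 2, by linarith, ?_⟩
        have h1 : IntegrableOn (fun u => (x - u) ^ m * f u) (Icc ((x + a) / 2) a) := by
          have : IntegrableOn (fun u => (x - u) ^ m * f u) (Ioc x a) := hint.symm.1
          rw [← integrableOn_Icc_iff_integrableOn_Ioc] at this
          exact this.mono_set (Icc_subset_Icc_left (by linarith))
        have hne : ∀ u ∈ Icc ((x + a) / 2) a, (x - u) ^ m ≠ 0 := fun u hu =>
          pow_ne_zero _ (by have := hu.1; intro h0; linarith)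
        have h2 : IntegrableOn (fun u => ((x - u) ^ m)⁻¹ * ((x - u) ^ m * f u))
            (Icc ((x + a) / 2) a) := by
          refine h1.continuousOn_mul (g := fun u => ((x - u) ^ m)⁻¹) ?_ isCompact_Icc
          exact ContinuousOn.inv₀ (by fun_prop) hne
        have h3 : IntegrableOn f (Icc ((x + a) / 2) a) := by
          refine h2.congr_fun (fun u hu => ?_) measurableSet_Icc
          have := hne u hu
          simp only
          rw [inv_mul_cancel_left₀ this]
        exact h3.mono_set Ioc_subset_Icc_self

/-- Cauchy formula for repeated integration: the Riemann–Liouville integral of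
integer order `n` is the `n`-fold iterated integral, i.e. its `n`-th iterated
derivative is `f` on `(a,b)` and all its iterated derivatives of order `≤ n-1`
vanish at `a`. -/
theorem cauchy_repeated_integration
    (n : ℕ) (hn : 1 ≤ n) (a b : ℝ) (hab : a < b) (f : ℝ → ℝ)
    (hf : ContinuousOn f (Set.Icc a b))
    (F : ℝ → ℝ)
    (hF : ∀ x, F x = (1 / (Nat.factorial (n - 1) : ℝ)) *
        ∫ u in a..x, (x - u) ^ (n - 1) * f u) :
    (∀ x ∈ Set.Ioo a b, iteratedDeriv n F x = f x) ∧
    (∀ k : ℕ, k ≤ n - 1 → iteratedDeriv k F a = 0) := by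
  obtain ⟨m, rfl⟩ : ∃ m, n = m + 1 := ⟨n - 1, by omega⟩
  simp only [Nat.add_sub_cancel] at hF ⊢
  obtain ⟨g, c, hg, hca, hgf, hG⟩ := crr_exists m a b hab f hf
  have key : ∀ k ≤ m, ∀ x ∈ Ioo c b, iteratedDeriv k F x =
      (1 / (Nat.factorial m : ℝ)) *
        ((m.descFactorial k : ℝ) * ∫ u in a..x, (x - u) ^ (m - k) * g u) := by
    intro k hk x hx
    have he : F =ᶠ[nhds x] fun y => (1 / (Nat.factorial m : ℝ)) *
        (fun y => ∫ u in a..y, (y - u) ^ m * g u) y := by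
      filter_upwards [Ioo_mem_nhds hx.1 hx.2] with y hy
      rw [hF y, hG y hy]
    rw [he.iteratedDeriv_eq k, iteratedDeriv_const_mul_field, crr_iter g hg a m k hk]
  constructor
  · intro x hx
    rw [iteratedDeriv_succ]
    have he : iteratedDeriv m F =ᶠ[nhds x] fun y => ∫ u in a..y, g u := by
      filter_upwards [Ioo_mem_nhds (hca.trans hx.1) hx.2] with y hy
      rw [key m le_rfl y hy, Nat.descFactorial_self]
      have : (m.factorial : ℝ) ≠ 0 := by positivity
      simp only [Nat.sub_self, pow_zero, one_mul]
      field_simp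
    rw [he.deriv_eq, ← hgf x hx]
    have hcont : ContinuousAt g x := by
      have h1 : ContinuousAt f x := hf.continuousAt (Icc_mem_nhds hx.1 hx.2)
      refine h1.congr ?_
      filter_upwards [Ioo_mem_nhds hx.1 hx.2] with y hy
      exact (hgf y hy).symm
    exact (intervalIntegral.integral_hasDerivAt_right hg.intervalIntegrable
      (hg.aestronglyMeasurable.stronglyMeasurableAtFilter) hcont).deriv
  · intro k hk
    rw [key k hk a ⟨hca, hab⟩]
    simp
end

section
/- The Mittag-Leffler function solves the fractional relaxation equation (Example 2): Let 0 < α < 1 and set y(x) = ∑_{k=0}^∞ x^(αk)/Γ(αk+1) for x ≥ 0, with base point a = 0. Then y(0) = 1, y is differentiable on (0,∞), and for every x > 0 the Caputo derivative of order α satisfies ᶜD^α y(x) = (1/Γ(1−α)) ∫_0^x y'(u)·(x−u)^(−α) du = y(x). -/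
open MeasureTheory Real Set

lemma ml_gamma_lower (M s : ℝ) (hM : 0 < M) (hs : 0 ≤ s) :
    M ^ s * Real.exp (-M) ≤ Real.Gamma (s + 1) := by
  have hc := Real.GammaIntegral_convergent (s := s + 1) (by linarith)
  rw [Real.Gamma_eq_integral (by linarith : 0 < s + 1), ← integral_exp_neg_Ioi M,
    ← integral_const_mul]
  have hsub : Ioi M ⊆ Ioi (0:ℝ) := Ioi_subset_Ioi hM.le
  calc ∫ x in Ioi M, M ^ s * Real.exp (-x)
      ≤ ∫ x in Ioi M, Real.exp (-x) * x ^ (s + 1 - 1) := by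
        apply setIntegral_mono_on _ (hc.mono_set hsub) measurableSet_Ioi
        · intro x hx
          rw [add_sub_cancel_right, mul_comm]
          have : M ^ s ≤ x ^ s := Real.rpow_le_rpow hM.le (le_of_lt hx) hs
          gcongr
        · exact (integrableOn_exp_neg_Ioi M).const_mul _
    _ ≤ _ := by
        apply setIntegral_mono_set hc
        · filter_upwards [ae_restrict_mem measurableSet_Ioi] with x hx
          have : (0:ℝ) < x := hx
          simp only [Pi.zero_apply]
          positivity
        · exact hsub.eventuallyLE

lemma ml_summable (α : ℝ) (hα : 0 < α) (x : ℝ) (hx : 0 < x) :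
    Summable fun k : ℕ => x ^ (α * k) / Real.Gamma (α * k + 1) := by
  have hr : ((1/2 : ℝ) ^ α) < 1 := Real.rpow_lt_one (by norm_num) (by norm_num) hα
  refine Summable.of_nonneg_of_le (fun k => ?_) (fun k => ?_)
    ((summable_geometric_of_lt_one (by positivity) hr).mul_left (Real.exp (2 * x)))
  · have := Real.Gamma_pos_of_pos (by positivity : 0 < α * k + 1)
    positivity
  · have hs : 0 ≤ α * k := by positivity
    have hg := Real.Gamma_pos_of_pos (by positivity : 0 < α * k + 1)
    have h := ml_gamma_lower (2 * x) (α * k) (by positivity) hs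
    rw [div_le_iff₀ hg]
    calc x ^ (α * k) = Real.exp (2 * x) * ((1/2 : ℝ) ^ α) ^ k *
          ((2 * x) ^ (α * k) * Real.exp (-(2 * x))) := by
          have e1 : Real.exp (2 * x) * Real.exp (-(2 * x)) = 1 := by
            rw [← Real.exp_add]; simp
          have e2 : ((1/2 : ℝ) ^ α) ^ k * (2 * x) ^ (α * k) = x ^ (α * k) := by
            rw [← Real.rpow_natCast, ← Real.rpow_mul (by norm_num),
              ← Real.mul_rpow (by norm_num) (by positivity)]
            congr 1; ring
          linear_combination -(x ^ (α * k)) * e1 -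
            Real.exp (2 * x) * Real.exp (-(2 * x)) * e2
      _ ≤ _ := by gcongr

set_option maxHeartbeats 1000000 in
lemma ml_hasDerivAt (α : ℝ) (hα : 0 < α) (x : ℝ) (hx : 0 < x) :
    HasDerivAt (fun x : ℝ => ∑' k : ℕ, x ^ (α * k) / Real.Gamma (α * k + 1))
      (∑' k : ℕ, (α * k) * x ^ (α * k - 1) / Real.Gamma (α * k + 1)) x := by
  have hx2 : x ∈ Ioo (x / 2) (2 * x) := ⟨by linarith, by linarith⟩
  refine hasDerivAt_tsum_of_isPreconnected
    (g := fun (k : ℕ) (z : ℝ) => z ^ (α * k) / Real.Gamma (α * k + 1))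
    (g' := fun (k : ℕ) (z : ℝ) => (α * k) * z ^ (α * k - 1) / Real.Gamma (α * k + 1))
    (t := Ioo (x / 2) (2 * x)) (y₀ := x)
    (u := fun k : ℕ => ((Real.exp 1 * (2 * x)) ^ (α * k) / Real.Gamma (α * k + 1)) * (2 / x))
    ((ml_summable α hα _ (by positivity)).mul_right _) isOpen_Ioo isPreconnected_Ioo
    ?_ ?_ hx2 (ml_summable α hα x hx) hx2
  · intro k z hz
    have hz0 : 0 < z := by have := hz.1; linarith
    exact (Real.hasDerivAt_rpow_const (Or.inl hz0.ne')).div_const _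
  · intro k z hz
    have hz0 : 0 < z := by have := hz.1; linarith
    have hg := Real.Gamma_pos_of_pos (by positivity : 0 < α * k + 1)
    have hs : 0 ≤ α * k := by positivity
    rw [Real.norm_of_nonneg (by positivity), div_mul_eq_mul_div]
    gcongr ?_ / _
    rw [Real.mul_rpow (by positivity) (by positivity), Real.rpow_sub_one hz0.ne', mul_assoc,
      ← Real.exp_mul, one_mul]
    have h1 : α * k ≤ Real.exp (α * k) := by linarith [Real.add_one_le_exp (α * k)]
    have h2 : z ^ (α * k) ≤ (2 * x) ^ (α * k) := Real.rpow_le_rpow hz0.le hz.2.le hs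
    have h3 : z⁻¹ ≤ 2 / x := by
      rw [inv_le_comm₀ hz0 (by positivity), inv_div]; exact hz.1.le
    rw [div_eq_mul_inv, ← mul_assoc α, mul_assoc (Real.exp _)]
    exact mul_le_mul h1 (mul_le_mul h2 h3 (by positivity) (by positivity))
      (by positivity) (by positivity)

lemma ml_beta (s t x : ℝ) (hs : 0 < s) (ht : 0 < t) (hx : 0 < x) :
    ∫ u in (0:ℝ)..x, u ^ (s - 1) * (x - u) ^ (t - 1) =
      x ^ (s + t - 1) * (Real.Gamma s * Real.Gamma t / Real.Gamma (s + t)) := by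
  have h := Complex.betaIntegral_scaled (s : ℂ) (t : ℂ) hx
  rw [Complex.betaIntegral_eq_Gamma_mul_div _ _ (by simpa) (by simpa)] at h
  have e : ∫ u in (0:ℝ)..x, (u : ℂ) ^ ((s:ℂ) - 1) * ((x : ℂ) - u) ^ ((t:ℂ) - 1) =
      ∫ u in (0:ℝ)..x, ((u ^ (s - 1) * (x - u) ^ (t - 1) : ℝ) : ℂ) := by
    apply intervalIntegral.integral_congr
    intro u hu
    rw [uIcc_of_le hx.le] at hu
    simp only
    rw [Complex.ofReal_mul, Complex.ofReal_cpow hu.1, Complex.ofReal_cpow (by linarith [hu.2])]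
    push_cast
    rfl
  rw [e, intervalIntegral.integral_ofReal] at h
  apply Complex.ofReal_injective
  rw [h]
  simp only [← Complex.ofReal_add, Complex.Gamma_ofReal]
  push_cast
  rw [Complex.ofReal_cpow hx.le]
  push_cast
  rfl

lemma ml_term (α : ℝ) (hα : 0 < α) (hα1 : α < 1) (x : ℝ) (hx : 0 < x) (k : ℕ) :
    ∫ u in (0:ℝ)..x, (α * (k + 1 : ℕ)) * u ^ (α * (k + 1 : ℕ) - 1) /
        Real.Gamma (α * (k + 1 : ℕ) + 1) * (x - u) ^ (-α) =
      Real.Gamma (1 - α) * (x ^ (α * k) / Real.Gamma (α * k + 1)) := by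
  set s : ℝ := α * (k + 1 : ℕ) with hs
  have hs0 : 0 < s := by positivity
  have h := ml_beta s (1 - α) x hs0 (by linarith) hx
  have e : ∀ u : ℝ, s * u ^ (s - 1) / Real.Gamma (s + 1) * (x - u) ^ (-α) =
      (1 / Real.Gamma s) * (u ^ (s - 1) * (x - u) ^ (1 - α - 1)) := by
    intro u
    have hg := (Real.Gamma_pos_of_pos hs0).ne'
    rw [Real.Gamma_add_one hs0.ne', show 1 - α - 1 = -α by ring]
    field_simp
  simp_rw [e]
  rw [intervalIntegral.integral_const_mul, h]
  have hg := (Real.Gamma_pos_of_pos hs0).ne'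
  have e1 : s + (1 - α) - 1 = α * k := by rw [hs]; push_cast; ring
  have e2 : s + (1 - α) = α * k + 1 := by rw [hs]; push_cast; ring
  rw [e1, e2]
  field_simp


/-- The Mittag-Leffler function solves the fractional relaxation equation
`ᶜD^α y = y`, `y 0 = 1` (Example 2): for `0 < α < 1`, the function
`y x = ∑ x^(αk)/Γ(αk+1)` satisfies `y 0 = 1`, is differentiable on `(0,∞)`,
and `ᶜD^α y x = y x` for all `x > 0`. -/
theorem mittagLeffler_solves_fractional_relaxation
    (α : ℝ) (hα : 0 < α) (hα1 : α < 1)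
    (y : ℝ → ℝ)
    (hy : ∀ x : ℝ, y x = ∑' k : ℕ, x ^ (α * k) / Real.Gamma (α * k + 1)) :
    y 0 = 1 ∧ DifferentiableOn ℝ y (Set.Ioi 0) ∧
    ∀ x : ℝ, 0 < x →
      (1 / Real.Gamma (1 - α)) *
          ∫ u in (0:ℝ)..x, deriv y u * (x - u) ^ (-α) = y x := by

  have hyf : y = fun x : ℝ => ∑' k : ℕ, x ^ (α * k) / Real.Gamma (α * k + 1) := funext hy
  have hd : ∀ x : ℝ, 0 < x → HasDerivAt y
      (∑' k : ℕ, (α * k) * x ^ (α * k - 1) / Real.Gamma (α * k + 1)) x := by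
    intro x hx
    rw [hyf]
    exact ml_hasDerivAt α hα x hx
  refine ⟨?_, fun x hx => (hd x hx).differentiableAt.differentiableWithinAt, ?_⟩
  · rw [hy, tsum_eq_single 0]
    · simp
    · intro k hk
      rw [Real.zero_rpow (by positivity), zero_div]
  intro x hx
  have hG : 0 < Real.Gamma (1 - α) := Real.Gamma_pos_of_pos (by linarith)
  set F : ℕ → ℝ → ℝ := fun k u => (α * (k + 1 : ℕ)) * u ^ (α * (k + 1 : ℕ) - 1) /
        Real.Gamma (α * (k + 1 : ℕ) + 1) * (x - u) ^ (-α) with hF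
  have hT : ∀ k, ∫ u in Ioc 0 x, F k u =
      Real.Gamma (1 - α) * (x ^ (α * k) / Real.Gamma (α * k + 1)) := by
    intro k
    rw [← intervalIntegral.integral_of_le hx.le]
    exact ml_term α hα hα1 x hx k
  have hnorm : ∀ k, ∫ u in Ioc 0 x, ‖F k u‖ = ∫ u in Ioc 0 x, F k u := by
    intro k
    refine setIntegral_congr_fun measurableSet_Ioc fun u hu => ?_
    have h0 := hu.1
    have h1 : 0 ≤ x - u := by linarith [hu.2]
    have hg := Real.Gamma_pos_of_pos (by positivity : 0 < α * (k + 1 : ℕ) + 1)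
    exact Real.norm_of_nonneg (by simp only [hF]; positivity)
  have hint : ∀ k, Integrable (F k) (volume.restrict (Ioc 0 x)) := by
    intro k
    by_contra hc
    have h1 := hT k
    rw [integral_undef hc] at h1
    have hg := Real.Gamma_pos_of_pos (by positivity : 0 < α * k + 1)
    have : 0 < Real.Gamma (1 - α) * (x ^ (α * k) / Real.Gamma (α * k + 1)) := by positivity
    linarith
  have hsum := hasSum_integral_of_summable_integral_norm hint (by
    simp_rw [hnorm, hT]
    exact (ml_summable α hα x hx).mul_left _)
  have hI : ∫ u in (0:ℝ)..x, deriv y u * (x - u) ^ (-α) = ∫ u in Ioc 0 x, ∑' k, F k u := by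
    rw [intervalIntegral.integral_of_le hx.le]
    refine setIntegral_congr_fun measurableSet_Ioc fun u hu => ?_
    simp only [hF]
    rw [tsum_mul_right, (hd u hu.1).deriv]
    congr 1
    refine (tsum_eq_tsum_of_ne_zero_bij (fun k => (k : ℕ) + 1) ?_ ?_ ?_)
    · intro a b h
      exact Subtype.ext (Nat.succ_injective h)
    · intro k hk
      rcases k with _ | k
      · simp at hk
      · exact ⟨⟨k, hk⟩, rfl⟩
    · intro k
      rfl
  rw [hI, ← hsum.tsum_eq]
  simp_rw [hT]
  rw [tsum_mul_left, hy]
  field_simp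
end
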